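/- Let K be an algebraically closed field, let m, n >= 1, and let w in S^{m,n}_infty. Then J_w equals the intersection, over all reduced pipe dreams D in RP(w), of the ideals (u_{ij} : (i,j) in D) of K[u_{ij} : (i,j) in [m] x [n]] generated by the variables indexed by D. -/

import Mathlib

namespace Paper

/-!
We model a permutation of the positive integers `{1, 2, 3, ...}` as an `Equiv.Perm ℕ`
that fixes `0`; all notions below refer only to positive inputs.
-/

/-- The rank `r_w(i,j) = #{a ∈ [i] : w(a) ∈ [j]}` of the `i × j` partial
permutation matrix of `w`, where `[k] = {1, ..., k}`. -/
def rnk (w : Equiv.Perm ℕ) (i j : ℕ) : ℕ :=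
  ((Finset.Icc 1 i).filter fun a => w a ∈ Finset.Icc 1 j).card

/-- Right descent set `Des_R(w) = {i ≥ 1 : w(i) > w(i+1)}`. -/
def DesR (w : Equiv.Perm ℕ) : Set ℕ := {i | 1 ≤ i ∧ w (i + 1) < w i}

/-- Left descent set `Des_L(w) = Des_R(w⁻¹)`. -/
def DesL (w : Equiv.Perm ℕ) : Set ℕ := DesR w⁻¹

/-- `S_∞`: permutations of the positive integers fixing all but finitely many points. -/
def SInfty : Set (Equiv.Perm ℕ) :=
  {w | w 0 = 0 ∧ Set.Finite {i : ℕ | w i ≠ i}}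

/-- `S^{m,n}_∞ = {w ∈ S_∞ : Des_R(w) ⊆ [m], Des_L(w) ⊆ [n]}`. -/
def SmnInfty (m n : ℕ) : Set (Equiv.Perm ℕ) :=
  {w | w ∈ SInfty ∧ DesR w ⊆ Set.Icc 1 m ∧ DesL w ⊆ Set.Icc 1 n}

/-- The Rothe diagram `D(w) = {(i,j) : 0 < j < w(i), 0 < i < w⁻¹(j)}`. -/
def Rothe (w : Equiv.Perm ℕ) : Set (ℕ × ℕ) :=
  {p | 0 < p.2 ∧ p.2 < w p.1 ∧ 0 < p.1 ∧ p.1 < w⁻¹ p.2}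

/-- The function `1_FPF`, sending `i ↦ i - (-1)^i` on positive integers (it fixes `0`). -/
def oneFPF : ℕ → ℕ := fun i => if i % 2 = 1 then i + 1 else i - 1

/-- `I^FPF_∞`: fixed-point-free involutions of the positive integers agreeing with
`1_FPF` at all sufficiently large inputs. -/
def IFPFInfty : Set (Equiv.Perm ℕ) :=
  {z | z 0 = 0 ∧ (∀ i, 1 ≤ i → z i ≠ i) ∧ z * z = 1 ∧ ∃ N, ∀ i, N ≤ i → z i = oneFPF i}

/-- The skew-symmetric Rothe diagram `D^ss(z) = {(i,j) : 0 < j < z(i), j < i < z(j)}`. -/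
def Dss (z : Equiv.Perm ℕ) : Set (ℕ × ℕ) :=
  {p | 0 < p.2 ∧ p.2 < z p.1 ∧ p.2 < p.1 ∧ p.1 < z p.2}

/-- `FPF_n(I_n) = {z ∈ I^FPF_∞ : D^ss(z) ⊆ [n] × [n]}`. -/
def FPFIn (n : ℕ) : Set (Equiv.Perm ℕ) :=
  {z | z ∈ IFPFInfty ∧ Dss z ⊆ Set.Icc 1 n ×ˢ Set.Icc 1 n}

/-- `ℓ_fpf(z) = |D^ss(z)|`. -/
noncomputable def ellFpf (z : Equiv.Perm ℕ) : ℕ := (Dss z).ncard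

/-- Bruhat order on `I^FPF_∞`: reflexive-transitive closure of `z < (i,j) z (i,j)`
whenever `i < j` and `ℓ_fpf` goes up by exactly one. -/
def fpfBruhatLe (z y : Equiv.Perm ℕ) : Prop :=
  Relation.ReflTransGen
    (fun a b => ∃ i j : ℕ, 1 ≤ i ∧ i < j ∧
      b = Equiv.swap i j * a * Equiv.swap i j ∧ ellFpf b = ellFpf a + 1) z y

/-- `i` is a visible descent of `z` if `i ≥ 1` and `z(i+1) < min(i, z(i))`. -/
def visibleDescent (z : Equiv.Perm ℕ) (i : ℕ) : Prop :=
  1 ≤ i ∧ z (i + 1) < min i (z i)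

/-- `Ψ(z, p) = {(p,r) z (p,r) : r > p, ℓ_fpf((p,r) z (p,r)) = ℓ_fpf(z) + 1}`. -/
def PsiSet (z : Equiv.Perm ℕ) (p : ℕ) : Set (Equiv.Perm ℕ) :=
  {y | ∃ r : ℕ, p < r ∧ y = Equiv.swap p r * z * Equiv.swap p r ∧ ellFpf y = ellFpf z + 1}

/-- The dominant component `dom(z) = {(i,j) : i, j ≥ 1, r_z(i,j) = 0}`. -/
def domSet (z : Equiv.Perm ℕ) : Set (ℕ × ℕ) :=
  {p | 1 ≤ p.1 ∧ 1 ≤ p.2 ∧ rnk z p.1 p.2 = 0}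

/-- `(p, q)` is an outer corner of `dom(z)`. -/
def IsOuterCorner (z : Equiv.Perm ℕ) (p q : ℕ) : Prop :=
  1 ≤ p ∧ 1 ≤ q ∧ (p, q) ∉ domSet z ∧
    (p = 1 ∨ (p - 1, q) ∈ domSet z) ∧ (q = 1 ∨ (p, q - 1) ∈ domSet z)

/-- `I_n`: involutions in `S_∞` fixing every `i > n`. -/
def InvolIn (n : ℕ) : Set (Equiv.Perm ℕ) :=
  {w | w 0 = 0 ∧ w * w = 1 ∧ ∀ i, n < i → w i = i}

/-- The fixed points of `z` lying in `[n]`. -/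
def fixedPtsIn (n : ℕ) (z : Equiv.Perm ℕ) : Finset ℕ :=
  (Finset.Icc 1 n).filter fun i => z i = i

/-- The function swapping `m + 2t - 1` and `m + 2t` for every `t ≥ 1`, fixing all other points. -/
def tailSwapFun (m : ℕ) : ℕ → ℕ := fun i =>
  if i ≤ m then i else if (i - m) % 2 = 1 then i + 1 else i - 1

theorem tailSwapFun_involutive (m : ℕ) : Function.Involutive (tailSwapFun m) := by
  intro i
  unfold tailSwapFun
  split_ifs <;> omega

/-- The involution swapping `m + 2t - 1` and `m + 2t` for every `t ≥ 1`. -/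
def tailSwap (m : ℕ) : Equiv.Perm ℕ :=
  Function.Involutive.toPerm _ (tailSwapFun_involutive m)

/-- The fixed-point-free standardization `FPF_n(z) = z ⋅ (i_1,n+1)⋯(i_k,n+k) ⋅ c`,
where `i_1 < ⋯ < i_k` are the fixed points of `z` in `[n]` and `c` swaps
`n+k+2t-1, n+k+2t` for all `t ≥ 1`. -/
noncomputable def fpfStd (n : ℕ) (z : Equiv.Perm ℕ) : Equiv.Perm ℕ :=
  z *
    (List.ofFn fun t : Fin (fixedPtsIn n z).card =>
      Equiv.swap ((fixedPtsIn n z).orderEmbOfFin rfl t) (n + (t : ℕ) + 1)).prod *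
    tailSwap (n + (fixedPtsIn n z).card)

/-- `Mat^ss_n(K)`: skew-symmetric `n × n` matrices (transpose is the negative, zero diagonal).
Row/column index `a : Fin n` corresponds to the (1-indexed) row/column `a + 1`. -/
def MatSS (K : Type*) [CommRing K] (n : ℕ) : Set (Matrix (Fin n) (Fin n) K) :=
  {A | A.transpose = -A ∧ ∀ i, A i i = 0}

/-- The skew-symmetric matrix Schubert variety
`X^ss_z = {A ∈ Mat^ss_n : rank A_{[i][j]} ≤ r_z(i,j) for all i, j ∈ [n]}`. -/
noncomputable def Xss (K : Type*) [Field K] (n : ℕ) (z : Equiv.Perm ℕ) :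
    Set (Matrix (Fin n) (Fin n) K) :=
  {A | A ∈ MatSS K n ∧ ∀ (i j : ℕ) (hi : i ≤ n) (hj : j ≤ n), 1 ≤ i → 1 ≤ j →
    (A.submatrix (Fin.castLE hi) (Fin.castLE hj)).rank ≤ rnk z i j}

/-- `#{(i,j) : i > j, j < z(i), i < z(j)}` for a permutation of `Fin N`
(the `0`-indexed version of `ℓ_fpf`). -/
def ellFpfFin {N : ℕ} (z : Equiv.Perm (Fin N)) : ℕ :=
  (Finset.univ.filter fun p : Fin N × Fin N => p.2 < p.1 ∧ p.2 < z p.1 ∧ p.1 < z p.2).card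

/-- The Pfaffian of an `N × N` matrix:
`pf(A) = ∑_{z fpf involution of [N]} (-1)^{ℓ_fpf(z)} ∏_{z(i) < i} A_{z(i), i}`.
(The sum is empty, hence `0`, when `N` is odd.) -/
noncomputable def Pfaffian {R : Type*} [CommRing R] {N : ℕ} (A : Matrix (Fin N) (Fin N) R) : R :=
  ∑ z ∈ Finset.univ.filter (fun z : Equiv.Perm (Fin N) => (∀ i, z i ≠ i) ∧ ∀ i, z (z i) = i),
    (-1 : R) ^ ellFpfFin z * ∏ i ∈ Finset.univ.filter (fun i : Fin N => z i < i), A (z i) i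

/-- Index set for the variables `u_{ij}`, `n ≥ i > j ≥ 1`, of the coordinate ring
`R_n = K[Mat^ss_n]`; the variable `⟨(a, b), _⟩` is `u_{a+1, b+1}`. -/
abbrev SSVar (n : ℕ) : Type := {p : Fin n × Fin n // p.2 < p.1}

/-- The generic skew-symmetric matrix `U^ss` over `R_n`. -/
noncomputable def Uss (K : Type*) [CommRing K] (n : ℕ) :
    Matrix (Fin n) (Fin n) (MvPolynomial (SSVar n) K) :=
  Matrix.of fun i j =>
    if h : j < i then MvPolynomial.X ⟨(i, j), h⟩
    else if h' : i < j then -MvPolynomial.X ⟨(j, i), h'⟩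
    else 0

/-- The ideal of polynomials vanishing on a set `X`, where a point `A` is evaluated
via `ev A : σ → K`. -/
noncomputable def vanishingIdeal {K : Type*} [CommRing K] {σ M : Type*}
    (X : Set M) (ev : M → σ → K) : Ideal (MvPolynomial σ K) where
  carrier := {f | ∀ A ∈ X, MvPolynomial.eval (ev A) f = 0}
  zero_mem' := by simp
  add_mem' := by
    intro f g hf hg
    simp only [Set.mem_setOf_eq] at *
    intro A hA
    rw [map_add, hf A hA, hg A hA, add_zero]
  smul_mem' := by
    intro c f hf
    simp only [Set.mem_setOf_eq] at *
    intro A hA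
    rw [smul_eq_mul, map_mul, hf A hA, mul_zero]

/-- `I(X^ss_z) ⊆ R_n`, where `u_{ij}` is evaluated at `A` as `A_{ij}`. -/
noncomputable def IXss (K : Type*) [Field K] (n : ℕ) (z : Equiv.Perm ℕ) :
    Ideal (MvPolynomial (SSVar n) K) :=
  vanishingIdeal (Xss K n z) fun A v => A v.1.1 v.1.2

/-- `pf(U^ss_{RR})` for a finite row/column set `R` (listed in increasing order). -/
noncomputable def pfUss (K : Type*) [CommRing K] {n : ℕ} (R : Finset (Fin n)) :
    MvPolynomial (SSVar n) K :=
  Pfaffian ((Uss K n).submatrix (fun s => R.orderEmbOfFin rfl s) fun t => R.orderEmbOfFin rfl t)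

/-- The ideal `I^ss_z`, generated by the Pfaffians `pf(U^ss_{RR})` over all nonempty
even-size `R ⊆ [n]` such that `R ⊆ [i]` and `|R ∩ [j]| > r_z(i,j)` for some `i ≥ j`. -/
noncomputable def IssIdeal (K : Type*) [Field K] (n : ℕ) (z : Equiv.Perm ℕ) :
    Ideal (MvPolynomial (SSVar n) K) :=
  Ideal.span {f : MvPolynomial (SSVar n) K | ∃ R : Finset (Fin n),
    R.Nonempty ∧ Even R.card ∧
    (∃ i j : ℕ, 1 ≤ j ∧ j ≤ i ∧ i ≤ n ∧ (∀ a ∈ R, (a : ℕ) + 1 ≤ i) ∧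
      rnk z i j < (R.filter fun a : Fin n => (a : ℕ) + 1 ≤ j).card) ∧
    f = pfUss K R}

/-- The square-free monomial `u^ss_{AB}`: zero if `A ⊙ B` meets the diagonal, and otherwise
the product of the variables `u_{ij}` over the pairs `i > j` with `(i,j)` or `(j,i)` in
`A ⊙ B = {(a_0, b_r), (a_1, b_{r-1}), ..., (a_r, b_0)}`. -/
noncomputable def ussMon (K : Type*) [CommRing K] {n : ℕ} (A B : Finset (Fin n)) :
    MvPolynomial (SSVar n) K :=
  if h : A.card = B.card then
    if ∃ t : Fin A.card, (A.orderEmbOfFin rfl t : Fin n) = B.orderEmbOfFin h.symm t.rev then 0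
    else
      ∏ v ∈ Finset.univ.filter (fun v : SSVar n => ∃ t : Fin A.card,
          (A.orderEmbOfFin rfl t = v.1.1 ∧ B.orderEmbOfFin h.symm t.rev = v.1.2) ∨
          (A.orderEmbOfFin rfl t = v.1.2 ∧ B.orderEmbOfFin h.symm t.rev = v.1.1)),
        MvPolynomial.X v
  else 0

/-- The monomial ideal `J^ss_r` of a symmetric rank table `r`, generated by the monomials
`u^ss_{AB}` with `A ⊆ [i]`, `B ⊆ [j]`, `|A| = |B| = r(i,j) + 1` for some `n ≥ i ≥ j ≥ 1`. -/
noncomputable def JssIdealOfTable (K : Type*) [CommRing K] (n : ℕ) (r : ℕ → ℕ → ℕ) :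
    Ideal (MvPolynomial (SSVar n) K) :=
  Ideal.span {g : MvPolynomial (SSVar n) K | ∃ (i j : ℕ) (A B : Finset (Fin n)),
    1 ≤ j ∧ j ≤ i ∧ i ≤ n ∧
    (∀ a ∈ A, (a : ℕ) + 1 ≤ i) ∧ (∀ b ∈ B, (b : ℕ) + 1 ≤ j) ∧
    A.card = r i j + 1 ∧ B.card = r i j + 1 ∧ g = ussMon K A B}

/-- `J^ss_z = J^ss_{r_z}`. -/
noncomputable def JssIdeal (K : Type*) [CommRing K] (n : ℕ) (z : Equiv.Perm ℕ) :
    Ideal (MvPolynomial (SSVar n) K) :=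
  JssIdealOfTable K n (rnk z)

/-- Total degree of a monomial (exponent vector). -/
def totalDeg {σ : Type*} (m : σ →₀ ℕ) : ℕ := m.sum fun _ e => e

/-- The lexicographic order on the variables `u_{ij}` by the pair `(i, j)`. -/
def varLT {n : ℕ} (v w : SSVar n) : Prop :=
  v.1.1 < w.1.1 ∨ (v.1.1 = w.1.1 ∧ v.1.2 < w.1.2)

/-- The (graded) reverse lexicographic term order on monomials of `R_n`:
`m₁ < m₂` iff `deg m₁ < deg m₂`, or the degrees agree and the lexicographically largest
variable with different exponents has strictly larger exponent in `m₁`. -/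
def revlexLT {n : ℕ} (m₁ m₂ : SSVar n →₀ ℕ) : Prop :=
  totalDeg m₁ < totalDeg m₂ ∨
    (totalDeg m₁ = totalDeg m₂ ∧ ∃ v, m₂ v < m₁ v ∧ ∀ w, varLT v w → m₁ w = m₂ w)

/-- The initial ideal of `I` with respect to a strict term order `lt`: the ideal
generated by the leading monomials `init(f)` of the nonzero `f ∈ I`. -/
noncomputable def initIdeal {K : Type*} [CommRing K] {σ : Type*}
    (lt : (σ →₀ ℕ) → (σ →₀ ℕ) → Prop) (I : Ideal (MvPolynomial σ K)) :
    Ideal (MvPolynomial σ K) :=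
  Ideal.span {g : MvPolynomial σ K | ∃ f ∈ I, f ≠ 0 ∧ ∃ m : σ →₀ ℕ, m ∈ f.support ∧
    (∀ m' ∈ f.support, m' ≠ m → lt m' m) ∧ g = MvPolynomial.monomial m (1 : K)}

/-- A term order on the monomials of a polynomial ring: a linear order in which `1` is
the unique minimum and multiplication by a fixed monomial preserves order. -/
structure TermOrder (σ : Type*) where
  le : (σ →₀ ℕ) → (σ →₀ ℕ) → Prop
  trans : ∀ a b c, le a b → le b c → le a c
  antisymm : ∀ a b, le a b → le b a → a = b
  total : ∀ a b, le a b ∨ le b a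
  zero_le : ∀ a, le 0 a
  add_le_add_right : ∀ a b c, le a b → le (a + c) (b + c)

/-- The initial ideal of `I` with respect to a term order `τ`. -/
noncomputable def initIdealLe {K : Type*} [CommRing K] {σ : Type*}
    (τ : TermOrder σ) (I : Ideal (MvPolynomial σ K)) : Ideal (MvPolynomial σ K) :=
  Ideal.span {g : MvPolynomial σ K | ∃ f ∈ I, f ≠ 0 ∧ ∃ m : σ →₀ ℕ, m ∈ f.support ∧
    (∀ m' ∈ f.support, τ.le m' m) ∧ g = MvPolynomial.monomial m (1 : K)}

/-- An ideal is homogeneous (w.r.t. total degree) iff it contains all homogeneous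
components of its elements. -/
def IsHomogIdeal {K : Type*} [CommSemiring K] {σ : Type*}
    (I : Ideal (MvPolynomial σ K)) : Prop :=
  ∀ f ∈ I, ∀ d : ℕ, MvPolynomial.homogeneousComponent d f ∈ I

/-- The reading order on boxes: rows top to bottom, each row right to left. -/
def pdRel (p q : ℕ × ℕ) : Prop := p.1 < q.1 ∨ (p.1 = q.1 ∧ q.2 ≤ p.2)

instance : DecidableRel pdRel := fun p q => by unfold pdRel; infer_instance

instance : IsTrans (ℕ × ℕ) pdRel :=
  ⟨fun a b c hab hbc => by unfold pdRel at *; omega⟩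

instance : IsAntisymm (ℕ × ℕ) pdRel :=
  ⟨fun a b hab hba => by
    unfold pdRel at hab hba
    exact Prod.ext_iff.mpr ⟨by omega, by omega⟩⟩

instance : IsTotal (ℕ × ℕ) pdRel :=
  ⟨fun a b => by unfold pdRel; omega⟩

/-- The pipe dream reading word of a finite set `D` of boxes: the letters `i + j - 1`
over `(i, j) ∈ D`, in the order making `(i, -j)` increase lexicographically. -/
def pdWord (D : Finset (ℕ × ℕ)) : List ℕ :=
  (D.sort pdRel).map fun p => p.1 + p.2 - 1

/-- The product `s_{i_1} s_{i_2} ⋯ s_{i_l}` of simple transpositions. -/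
def wordProd (l : List ℕ) : Equiv.Perm ℕ :=
  (l.map fun i => Equiv.swap i (i + 1)).prod

/-- `l` is a reduced word for `w`: a minimal-length word of positive letters whose
product of simple transpositions is `w`. -/
def IsReducedWordOf (w : Equiv.Perm ℕ) (l : List ℕ) : Prop :=
  (∀ a ∈ l, 1 ≤ a) ∧ wordProd l = w ∧
    ∀ l' : List ℕ, (∀ a ∈ l', 1 ≤ a) → wordProd l' = w → l.length ≤ l'.length

/-- The set `RP(w)` of reduced pipe dreams for `w`. -/
def RP (w : Equiv.Perm ℕ) : Set (Finset (ℕ × ℕ)) :=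
  {D | (∀ p ∈ D, 1 ≤ p.1 ∧ 1 ≤ p.2) ∧ IsReducedWordOf w (pdWord D)}

/-- `I^FPF_m`: involutions in `S_∞` that are fixed-point-free on `[m]` and fix
all `i > m`. -/
def IFPFm (m : ℕ) : Set (Equiv.Perm ℕ) :=
  {y | y 0 = 0 ∧ y * y = 1 ∧ (∀ i, 1 ≤ i → i ≤ m → y i ≠ i) ∧ ∀ i, m < i → y i = i}

/-- `z = FPF_m(y)`: `z` agrees with `y` on `[m]` and swaps `m + 2k - 1, m + 2k`
for all `k ≥ 1`. -/
def IsFPFStdOf (m : ℕ) (y z : Equiv.Perm ℕ) : Prop :=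
  (∀ i, i ≤ m → z i = y i) ∧
    ∀ k : ℕ, z (m + 2 * k + 1) = m + 2 * k + 2 ∧ z (m + 2 * k + 2) = m + 2 * k + 1

/-- The set `FP(z)` of fpf-involution pipe dreams for `z ∈ I^FPF_∞`. -/
def FP (z : Equiv.Perm ℕ) : Set (Finset (ℕ × ℕ)) :=
  {E | ∃ (m : ℕ) (y : Equiv.Perm ℕ) (D : Finset (ℕ × ℕ)), Even m ∧ y ∈ IFPFm m ∧
    IsFPFStdOf m y z ∧ D ∈ RP y ∧ D.image Prod.swap = D ∧
    E = D.filter fun p => p.2 < p.1}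

/-- The minor `det(U_{AB})` of the generic `m × n` matrix `U`, with rows `A` and
columns `B` listed in increasing order. -/
noncomputable def genMinor (K : Type*) [CommRing K] {m n : ℕ}
    (A : Finset (Fin m)) (B : Finset (Fin n)) (h : A.card = B.card) :
    MvPolynomial (Fin m × Fin n) K :=
  (Matrix.of fun s t : Fin A.card =>
    (MvPolynomial.X (A.orderEmbOfFin rfl s, B.orderEmbOfFin h.symm t) :
      MvPolynomial (Fin m × Fin n) K)).det

/-- The antidiagonal monomial `u_{AB} = ∏_{(a,b) ∈ A ⊙ B} u_{ab}`. -/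
noncomputable def genMon (K : Type*) [CommRing K] {m n : ℕ}
    (A : Finset (Fin m)) (B : Finset (Fin n)) (h : A.card = B.card) :
    MvPolynomial (Fin m × Fin n) K :=
  ∏ t : Fin A.card, MvPolynomial.X (A.orderEmbOfFin rfl t, B.orderEmbOfFin h.symm t.rev)

/-- The exponent vector of the antidiagonal monomial `u_{AB}`. -/
noncomputable def antidiagExp {m n : ℕ} (A : Finset (Fin m)) (B : Finset (Fin n))
    (h : A.card = B.card) : (Fin m × Fin n) →₀ ℕ :=
  ∑ t : Fin A.card, Finsupp.single (A.orderEmbOfFin rfl t, B.orderEmbOfFin h.symm t.rev) 1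

/-- The ideal `I_w`, generated by the minors `det(U_{AB})` with `A ⊆ [i]`, `B ⊆ [j]`,
`|A| = |B| = r_w(i,j) + 1` for some `(i,j) ∈ [m] × [n]`. -/
noncomputable def IwIdeal (K : Type*) [Field K] (m n : ℕ) (w : Equiv.Perm ℕ) :
    Ideal (MvPolynomial (Fin m × Fin n) K) :=
  Ideal.span {g : MvPolynomial (Fin m × Fin n) K |
    ∃ (i j : ℕ) (A : Finset (Fin m)) (B : Finset (Fin n)) (h : A.card = B.card),
      1 ≤ i ∧ i ≤ m ∧ 1 ≤ j ∧ j ≤ n ∧ (∀ a ∈ A, (a : ℕ) + 1 ≤ i) ∧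
      (∀ b ∈ B, (b : ℕ) + 1 ≤ j) ∧ A.card = rnk w i j + 1 ∧ g = genMinor K A B h}

/-- The monomial ideal `J_w`, generated by the monomials `u_{AB}` with `A ⊆ [i]`,
`B ⊆ [j]`, `|A| = |B| = r_w(i,j) + 1` for some `(i,j) ∈ [m] × [n]`. -/
noncomputable def JwIdeal (K : Type*) [Field K] (m n : ℕ) (w : Equiv.Perm ℕ) :
    Ideal (MvPolynomial (Fin m × Fin n) K) :=
  Ideal.span {g : MvPolynomial (Fin m × Fin n) K |
    ∃ (i j : ℕ) (A : Finset (Fin m)) (B : Finset (Fin n)) (h : A.card = B.card),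
      1 ≤ i ∧ i ≤ m ∧ 1 ≤ j ∧ j ≤ n ∧ (∀ a ∈ A, (a : ℕ) + 1 ≤ i) ∧
      (∀ b ∈ B, (b : ℕ) + 1 ≤ j) ∧ A.card = rnk w i j + 1 ∧ g = genMon K A B h}

/-- The matrix Schubert variety
`X_w = {A ∈ Mat_{m×n} : rank A_{[i][j]} ≤ r_w(i,j) for all (i,j) ∈ [m] × [n]}`. -/
noncomputable def Xw (K : Type*) [Field K] (m n : ℕ) (w : Equiv.Perm ℕ) :
    Set (Matrix (Fin m) (Fin n) K) :=
  {A | ∀ (i j : ℕ) (hi : i ≤ m) (hj : j ≤ n), 1 ≤ i → 1 ≤ j →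
    (A.submatrix (Fin.castLE hi) (Fin.castLE hj)).rank ≤ rnk w i j}

/-- `I(X_w)`: the ideal of polynomials vanishing on `X_w`. -/
noncomputable def IXw (K : Type*) [Field K] (m n : ℕ) (w : Equiv.Perm ℕ) :
    Ideal (MvPolynomial (Fin m × Fin n) K) :=
  vanishingIdeal (Xw K m n w) fun A v => A v.1 v.2

/-- The variable `u_{pq}` (with `1 ≤ q < p ≤ n`) of `R_n`. -/
def ssvar {n : ℕ} (p q : ℕ) (hp : p ≤ n) (hq : 1 ≤ q) (hqp : q < p) : SSVar n :=
  ⟨(⟨p - 1, by omega⟩, ⟨q - 1, by omega⟩), Fin.mk_lt_mk.mpr (by omega)⟩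

/-- Index set for the variables `u_{ij}`, `i > j ≥ 1`, over all positive integers. -/
abbrev PVar : Type := {p : ℕ × ℕ // 1 ≤ p.2 ∧ p.2 < p.1}

/-- The generic skew-symmetric array `U^ss` over the positive integers:
`u_{xy}` if `x > y`, `-u_{yx}` if `x < y`, `0` if `x = y`. -/
noncomputable def UssP (K : Type*) [CommRing K] (x y : ℕ) : MvPolynomial PVar K :=
  if h : 1 ≤ y ∧ y < x then MvPolynomial.X ⟨(x, y), h⟩
  else if h' : 1 ≤ x ∧ x < y then -MvPolynomial.X ⟨(y, x), h'⟩
  else 0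

/-- `pf(U^ss_{RR})` for a finite set `R` of positive integers. -/
noncomputable def pfUssP (K : Type*) [CommRing K] (R : Finset ℕ) : MvPolynomial PVar K :=
  Pfaffian (Matrix.of fun s t : Fin R.card =>
    UssP K (R.orderEmbOfFin rfl s) (R.orderEmbOfFin rfl t))

/-- `g_{AB}`: the Pfaffian of the `(|B|+|A|) × (|B|+|A|)` skew-symmetric matrix whose
rows and columns are labeled by `B` (increasing) followed by `A` (increasing), with
entry `U^ss_{xy}` at a position labeled `(x, y)`, except that the entry is `0` when
both labels come from the `A`-block. -/
noncomputable def gAB (K : Type*) [CommRing K] (A B : Finset ℕ) : MvPolynomial PVar K :=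
  Pfaffian ((Matrix.of fun p q : Fin B.card ⊕ Fin A.card =>
      match p, q with
      | Sum.inl s, Sum.inl t => UssP K (B.orderEmbOfFin rfl s) (B.orderEmbOfFin rfl t)
      | Sum.inl s, Sum.inr t => UssP K (B.orderEmbOfFin rfl s) (A.orderEmbOfFin rfl t)
      | Sum.inr s, Sum.inl t => UssP K (A.orderEmbOfFin rfl s) (B.orderEmbOfFin rfl t)
      | Sum.inr _, Sum.inr _ => (0 : MvPolynomial PVar K)).submatrix
    finSumFinEquiv.symm finSumFinEquiv.symm)

/-- The exponent of the sign `⟨T, S⟩ = (-1)^{|S||T| + C(|S|,2) + ∑ of the (1-indexed)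
positions in the increasing enumeration of `T` occupied by elements of `S`}`. -/
def setSgnExp (T S : Finset ℕ) : ℕ :=
  S.card * T.card + Nat.choose S.card 2 +
    ∑ t : Fin T.card, if T.orderEmbOfFin rfl t ∈ S then (t : ℕ) + 1 else 0

/-!
Let `H` be a finite set of boxes. Reading `H` box by box shows that the rank function of the
Demazure product of its reading word sends `(i, j)` to the largest size of an antidiagonal in
`[i] × [j]` avoiding `H`: prepending a box changes both sides in a single column, by the same
recursion. By the subword property, `H` contains a reduced pipe dream of `w` exactly when these
ranks are bounded by those of `w`, and the descent conditions on `w` reduce the bound to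
`[m] × [n]`. Hence a set `T` of boxes of `[m] × [n]` contains some `A ⊙ B` from the generators of
`J_w` if and only if no reduced pipe dream of `w` lies in the complement of `T`, that is, if and
only if `T` meets every reduced pipe dream. For squarefree monomial ideals this is the claimed
equality.
-/

open Finset

/-! ### Antidiagonals -/

section Antidiagonal

variable {α β : Type*} [LinearOrder α] [LinearOrder β]

/-- A finite set of boxes is an antidiagonal if its boxes can be listed with strictly increasing
rows and strictly decreasing columns. Applied in both orders, the equivalence also forces two boxes
sharing a row or a column to coincide. -/
def IsAntidiagonal (S : Finset (α × β)) : Prop :=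
  ∀ p ∈ S, ∀ q ∈ S, p.1 < q.1 ↔ q.2 < p.2

theorem IsAntidiagonal.mono {S T : Finset (α × β)} (hT : IsAntidiagonal T) (hST : S ⊆ T) :
    IsAntidiagonal S :=
  fun p hp q hq => hT p (hST hp) q (hST hq)

theorem IsAntidiagonal.eq_of_fst_eq {S : Finset (α × β)} (hS : IsAntidiagonal S) {p q : α × β}
    (hp : p ∈ S) (hq : q ∈ S) (h : p.1 = q.1) : p = q := by
  have h_le : q.2 ≤ p.2 := not_lt.1 fun hlt => ((hS q hq p hp).2 hlt).ne' h
  have h_ge : p.2 ≤ q.2 := not_lt.1 fun hlt => ((hS p hp q hq).2 hlt).ne h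
  exact Prod.ext h (le_antisymm h_ge h_le)

theorem IsAntidiagonal.eq_of_snd_eq {S : Finset (α × β)} (hS : IsAntidiagonal S) {p q : α × β}
    (hp : p ∈ S) (hq : q ∈ S) (h : p.2 = q.2) : p = q := by
  have h_le : q.1 ≤ p.1 := not_lt.1 fun hlt => ((hS p hp q hq).1 hlt).ne' h
  have h_ge : p.1 ≤ q.1 := not_lt.1 fun hlt => ((hS q hq p hp).1 hlt).ne h
  exact Prod.ext (le_antisymm h_ge h_le) h

theorem IsAntidiagonal.eq_of_mem_hook {S : Finset (α × β)} (hS : IsAntidiagonal S) {c : α × β}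
    (hc : ∀ p ∈ S, c.1 ≤ p.1 ∧ p.2 ≤ c.2) {p q : α × β} (hp : p ∈ S) (hq : q ∈ S)
    (hpc : p.1 = c.1 ∨ p.2 = c.2) (hqc : q.1 = c.1 ∨ q.2 = c.2) : p = q := by
  have corner : ∀ p ∈ S, ∀ q ∈ S, p.1 = c.1 → q.2 = c.2 → p = q := by
    intro p hp q hq hp₁ hq₂
    refine hS.eq_of_fst_eq hp hq (le_antisymm (hp₁ ▸ (hc q hq).1) (not_lt.1 fun hlt => ?_))
    exact ((hS p hp q hq).1 hlt).not_ge (hq₂ ▸ (hc p hp).2)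
  rcases hpc with hp₁ | hp₂ <;> rcases hqc with hq₁ | hq₂
  · exact hS.eq_of_fst_eq hp hq (hp₁.trans hq₁.symm)
  · exact corner p hp q hq hp₁ hq₂
  · exact (corner q hq p hp hq₁ hp₂).symm
  · exact hS.eq_of_snd_eq hp hq (hp₂.trans hq₂.symm)

theorem IsAntidiagonal.insert {S : Finset (α × β)} (hS : IsAntidiagonal S) {c : α × β}
    (hc : ∀ p ∈ S, c.1 < p.1 ∧ p.2 < c.2) : IsAntidiagonal (insert c S) := by
  intro p hp q hq
  rcases mem_insert.1 hp with rfl | hpS <;> rcases mem_insert.1 hq with rfl | hqS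
  · simp
  · exact iff_of_true (hc q hqS).1 (hc q hqS).2
  · exact iff_of_false (hc p hpS).1.not_gt (hc p hpS).2.not_gt
  · exact hS p hpS q hqS

open Classical in
/-- The largest size of an antidiagonal contained in `U`. -/
noncomputable def maxAntidiagonalCard (U : Finset (α × β)) : ℕ :=
  (U.powerset.filter IsAntidiagonal).sup card

theorem le_maxAntidiagonalCard_iff {U : Finset (α × β)} {s : ℕ} :
    s ≤ maxAntidiagonalCard U ↔ ∃ S ⊆ U, IsAntidiagonal S ∧ #S = s := by
  classical
  constructor
  · intro hs
    have hne : (U.powerset.filter IsAntidiagonal).Nonempty :=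
      ⟨∅, by simp [IsAntidiagonal]⟩
    obtain ⟨T, hT, hmax⟩ := exists_mem_eq_sup _ hne card
    rw [mem_filter, mem_powerset] at hT
    obtain ⟨S, hST, hcard⟩ := exists_subset_card_eq (hs.trans_eq hmax)
    exact ⟨S, hST.trans hT.1, hT.2.mono hST, hcard⟩
  · rintro ⟨S, hSU, hS, rfl⟩
    exact le_sup (f := card) (mem_filter.2 ⟨mem_powerset.2 hSU, hS⟩)

theorem IsAntidiagonal.card_le_maxAntidiagonalCard {S U : Finset (α × β)} (hS : IsAntidiagonal S)
    (hSU : S ⊆ U) : #S ≤ maxAntidiagonalCard U :=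
  le_maxAntidiagonalCard_iff.2 ⟨S, hSU, hS, rfl⟩

theorem maxAntidiagonalCard_mono {U V : Finset (α × β)} (h : U ⊆ V) :
    maxAntidiagonalCard U ≤ maxAntidiagonalCard V := by
  obtain ⟨S, hSU, hS, hcard⟩ := le_maxAntidiagonalCard_iff.1 (le_refl (maxAntidiagonalCard U))
  exact hcard ▸ hS.card_le_maxAntidiagonalCard (hSU.trans h)

theorem maxAntidiagonalCard_of_corner_mem {U : Finset (α × β)} {c : α × β} (hcU : c ∈ U)
    (hU : ∀ p ∈ U, c.1 ≤ p.1 ∧ p.2 ≤ c.2) :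
    maxAntidiagonalCard U = maxAntidiagonalCard {p ∈ U | c.1 < p.1 ∧ p.2 < c.2} + 1 := by
  apply le_antisymm
  · obtain ⟨S, hSU, hS, hcard⟩ := le_maxAntidiagonalCard_iff.1 (le_refl (maxAntidiagonalCard U))
    have h_hook : #{p ∈ S | ¬(c.1 < p.1 ∧ p.2 < c.2)} ≤ 1 := by
      refine card_le_one.2 fun p hp q hq => ?_
      have on_hook {p : α × β} (hp : p ∈ S) (hpc : ¬(c.1 < p.1 ∧ p.2 < c.2)) :
          p.1 = c.1 ∨ p.2 = c.2 := by
        have := hU p (hSU hp)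
        grind
      rw [mem_filter] at hp hq
      exact hS.eq_of_mem_hook (fun p hp => hU p (hSU hp)) hp.1 hq.1
        (on_hook hp.1 hp.2) (on_hook hq.1 hq.2)
    have h_rest : #{p ∈ S | c.1 < p.1 ∧ p.2 < c.2} ≤
        maxAntidiagonalCard {p ∈ U | c.1 < p.1 ∧ p.2 < c.2} :=
      (hS.mono (filter_subset _ _)).card_le_maxAntidiagonalCard (filter_subset_filter _ hSU)
    rw [← hcard, ← card_filter_add_card_filter_not (s := S) fun p => c.1 < p.1 ∧ p.2 < c.2]
    exact add_le_add h_rest h_hook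
  · obtain ⟨S, hSU, hS, hcard⟩ := le_maxAntidiagonalCard_iff.1
      (le_refl (maxAntidiagonalCard {p ∈ U | c.1 < p.1 ∧ p.2 < c.2}))
    have hSc : ∀ p ∈ S, c.1 < p.1 ∧ p.2 < c.2 := fun p hp => (mem_filter.1 (hSU hp)).2
    have hcS : c ∉ S := fun hc => (hSc c hc).1.false
    rw [← hcard, ← card_insert_of_notMem hcS]
    exact (hS.insert hSc).card_le_maxAntidiagonalCard
      (insert_subset hcU (hSU.trans (filter_subset _ _)))

theorem maxAntidiagonalCard_of_corner_notMem {U : Finset (α × β)} {c : α × β} (hcU : c ∉ U)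
    (hU : ∀ p ∈ U, c.1 ≤ p.1 ∧ p.2 ≤ c.2) :
    maxAntidiagonalCard U = max (maxAntidiagonalCard {p ∈ U | p.2 < c.2})
      (maxAntidiagonalCard {p ∈ U | c.1 < p.1}) := by
  apply le_antisymm
  · obtain ⟨S, hSU, hS, hcard⟩ := le_maxAntidiagonalCard_iff.1 (le_refl (maxAntidiagonalCard U))
    have h_avoid : (∀ p ∈ S, p.2 < c.2) ∨ ∀ q ∈ S, c.1 < q.1 := by
      by_contra! h
      obtain ⟨⟨p, hp, hpc⟩, q, hq, hqc⟩ := h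
      have hp₂ : p.2 = c.2 := (hU p (hSU hp)).2.antisymm hpc
      have hq₁ : q.1 = c.1 := hqc.antisymm (hU q (hSU hq)).1
      obtain rfl := hS.eq_of_mem_hook (fun p hp => hU p (hSU hp)) hp hq (.inr hp₂) (.inl hq₁)
      exact hcU (Prod.ext hq₁ hp₂ ▸ hSU hp)
    rw [← hcard, le_max_iff]
    exact h_avoid.imp
      (fun h => hS.card_le_maxAntidiagonalCard fun p hp => mem_filter.2 ⟨hSU hp, h p hp⟩)
      (fun h => hS.card_le_maxAntidiagonalCard fun p hp => mem_filter.2 ⟨hSU hp, h p hp⟩)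
  · exact max_le (maxAntidiagonalCard_mono (filter_subset _ _))
      (maxAntidiagonalCard_mono (filter_subset _ _))

end Antidiagonal

/-! ### Antidiagonals avoiding a set of boxes -/

/-- The largest size of an antidiagonal in rows `a, …, i` and columns `1, …, j` avoiding `H`. -/
noncomputable def antidiagonalRank (H : Finset (ℕ × ℕ)) (a i j : ℕ) : ℕ :=
  maxAntidiagonalCard ((Icc a i ×ˢ Icc 1 j) \ H)

theorem antidiagonalRank_insert_of_outside {H : Finset (ℕ × ℕ)} {p : ℕ × ℕ} {a i j : ℕ}
    (h : p.1 < a ∨ j < p.2) :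
    antidiagonalRank (insert p H) a i j = antidiagonalRank H a i j := by
  have hp : p ∉ Icc a i ×ˢ Icc 1 j := by
    simp only [mem_product, mem_Icc]
    omega
  rw [antidiagonalRank, antidiagonalRank, sdiff_insert_of_notMem hp]

theorem antidiagonalRank_of_isEmpty {H : Finset (ℕ × ℕ)} {a i j : ℕ} (h : i < a ∨ j = 0) :
    antidiagonalRank H a i j = 0 := by
  have hempty : Icc a i ×ˢ Icc 1 j = ∅ := by
    rw [product_eq_empty, Icc_eq_empty_iff, Icc_eq_empty_iff]
    omega
  simp [antidiagonalRank, hempty, maxAntidiagonalCard]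

theorem antidiagonalRank_succ_of_notMem {H : Finset (ℕ × ℕ)} {a i j : ℕ} (hai : a ≤ i)
    (h : (a, j + 1) ∉ H) :
    antidiagonalRank H a i (j + 1) = antidiagonalRank H (a + 1) i j + 1 := by
  unfold antidiagonalRank
  rw [maxAntidiagonalCard_of_corner_mem (c := (a, j + 1))]
  · congr 2
    ext p
    simp only [mem_filter, mem_sdiff, mem_product, mem_Icc]
    grind
  · simp [h, hai]
  · simp only [mem_sdiff, mem_product, mem_Icc]
    exact fun p hp => ⟨hp.1.1.1, hp.1.2.2⟩

theorem antidiagonalRank_succ_of_mem {H : Finset (ℕ × ℕ)} {a i j : ℕ} (h : (a, j + 1) ∈ H) :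
    antidiagonalRank H a i (j + 1) =
      max (antidiagonalRank H a i j) (antidiagonalRank H (a + 1) i (j + 1)) := by
  unfold antidiagonalRank
  rw [maxAntidiagonalCard_of_corner_notMem (c := (a, j + 1))]
  · congr 2 <;>
    · ext p
      simp only [mem_filter, mem_sdiff, mem_product, mem_Icc]
      grind
  · simp [h]
  · simp only [mem_sdiff, mem_product, mem_Icc]
    exact fun p hp => ⟨hp.1.1.1, hp.1.2.2⟩

theorem antidiagonalRank_add_of_rows_free {H : Finset (ℕ × ℕ)} {d i : ℕ} (hdi : d ≤ i)
    (h : ∀ p ∈ H, d < p.1) (j : ℕ) :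
    antidiagonalRank H 1 i (d + j) = d + antidiagonalRank H (d + 1) i j := by
  induction d generalizing j with
  | zero => simp
  | succ d ih =>
    have h_free : (d + 1, j + 1) ∉ H := fun hp => (h _ hp).false
    rw [show d + 1 + j = d + (j + 1) by omega, ih (by omega) (fun p hp => by grind),
      antidiagonalRank_succ_of_notMem hdi h_free]
    omega

theorem antidiagonalRank_eq_right_of_rows_free {H : Finset (ℕ × ℕ)} {d i j : ℕ} (hdi : d ≤ i)
    (hjd : j ≤ d) (h : ∀ p ∈ H, d < p.1) : antidiagonalRank H 1 i j = j := by
  have h_free : ∀ p ∈ H, j < p.1 := fun p hp => hjd.trans_lt (h p hp)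
  simpa [antidiagonalRank_of_isEmpty] using
    antidiagonalRank_add_of_rows_free (hjd.trans hdi) h_free 0

theorem antidiagonalRank_eq_min_of_rows_free {H : Finset (ℕ × ℕ)} {i : ℕ}
    (h : ∀ p ∈ H, i < p.1) (j : ℕ) : antidiagonalRank H 1 i j = min i j := by
  rcases le_total j i with hji | hij
  · rw [min_eq_right hji, antidiagonalRank_eq_right_of_rows_free le_rfl hji h]
  · obtain ⟨t, rfl⟩ := Nat.exists_eq_add_of_le hij
    rw [antidiagonalRank_add_of_rows_free le_rfl h,
      antidiagonalRank_of_isEmpty (.inl i.lt_succ_self)]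
    omega

section Insert

variable {H : Finset (ℕ × ℕ)} {a b : ℕ}

theorem antidiagonalRank_insert_of_ne
    (hH : ∀ q ∈ H, a + 1 < q.1 ∨ a + 1 = q.1 ∧ q.2 < b + 1) (i : ℕ) {j : ℕ}
    (hj : j ≠ a + b + 1) :
    antidiagonalRank (insert (a + 1, b + 1) H) 1 i j = antidiagonalRank H 1 i j := by
  have rows_H : ∀ q ∈ H, a < q.1 := by grind
  have rows_insert : ∀ q ∈ insert (a + 1, b + 1) H, a < q.1 := by grind
  rcases le_or_gt i a with hia | (hai : a + 1 ≤ i)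
  · rw [antidiagonalRank_eq_min_of_rows_free (by grind),
      antidiagonalRank_eq_min_of_rows_free (by grind)]
  have hai' : a ≤ i := Nat.le_of_succ_le hai
  rcases le_or_gt j a with hja | haj
  · rw [antidiagonalRank_eq_right_of_rows_free hai' hja rows_insert,
      antidiagonalRank_eq_right_of_rows_free hai' hja rows_H]
  obtain ⟨t, rfl⟩ : ∃ t, j = a + (t + 1) := ⟨j - a - 1, by omega⟩
  rw [antidiagonalRank_add_of_rows_free hai' rows_insert,
    antidiagonalRank_add_of_rows_free hai' rows_H]
  rcases lt_or_gt_of_ne (show t ≠ b by omega) with htb | hbt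
  · rw [antidiagonalRank_insert_of_outside (by grind)]
  · have free_H : (a + 1, t + 1) ∉ H := fun hq => by grind
    have free_insert : (a + 1, t + 1) ∉ insert (a + 1, b + 1) H := by grind
    rw [antidiagonalRank_succ_of_notMem hai free_insert,
      antidiagonalRank_succ_of_notMem hai free_H, antidiagonalRank_insert_of_outside (by grind)]

/-- Below the free rows `1, …, a` the corner `(a + 1, b + 1)` is blocked; the two ways around it are
read off in the neighbouring columns `a + b` and `a + b + 2`. -/
theorem antidiagonalRank_insert_self
    (hH : ∀ q ∈ H, a + 1 < q.1 ∨ a + 1 = q.1 ∧ q.2 < b + 1) (i : ℕ) :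
    antidiagonalRank (insert (a + 1, b + 1) H) 1 i (a + b + 1) =
      max (antidiagonalRank H 1 i (a + b)) (antidiagonalRank H 1 i (a + b + 2) - 1) := by
  have rows_H : ∀ q ∈ H, a < q.1 := by grind
  have rows_insert : ∀ q ∈ insert (a + 1, b + 1) H, a < q.1 := by grind
  rcases le_or_gt i a with hia | (hai : a + 1 ≤ i)
  · rw [antidiagonalRank_eq_min_of_rows_free (by grind),
      antidiagonalRank_eq_min_of_rows_free (by grind),
      antidiagonalRank_eq_min_of_rows_free (by grind)]
    omega
  have hai' : a ≤ i := Nat.le_of_succ_le hai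
  have free_H : (a + 1, b + 1 + 1) ∉ H := fun hq => by grind
  have left : antidiagonalRank (insert (a + 1, b + 1) H) (a + 1) i b =
      antidiagonalRank H (a + 1) i b := antidiagonalRank_insert_of_outside (by grind)
  have below : antidiagonalRank (insert (a + 1, b + 1) H) (a + 1 + 1) i (b + 1) =
      antidiagonalRank H (a + 1 + 1) i (b + 1) := antidiagonalRank_insert_of_outside (by grind)
  rw [add_assoc a b 1, add_assoc a b 2, antidiagonalRank_add_of_rows_free hai' rows_insert,
    antidiagonalRank_add_of_rows_free hai' rows_H,
    antidiagonalRank_add_of_rows_free hai' rows_H,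
    antidiagonalRank_succ_of_mem (mem_insert_self _ _), left, below,
    antidiagonalRank_succ_of_notMem hai free_H]
  omega

end Insert

/-! ### Demazure products and reading words -/

/-- The rank function `r_u(i, j)` of the Demazure product `u` of a word of positive letters.
Replacing `v` by the Demazure product of `s_k` and `v` changes only column `k`, where the rank
becomes the smaller of `r_v(i, k)` and `r_v(i, k - 1) + r_v(i, k + 1) - r_v(i, k)`. Since ranks
increase by `0` or `1` from one column to the next, this is the maximum below; the truncated
subtraction is harmless there. -/
def demazureRank : List ℕ → ℕ → ℕ → ℕ
  | [], i, j => min i j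
  | k :: Q, i, j =>
    if j = k then max (demazureRank Q i (k - 1)) (demazureRank Q i (k + 1) - 1)
    else demazureRank Q i j

theorem demazureRank_cons_self (k : ℕ) (Q : List ℕ) (i : ℕ) :
    demazureRank (k :: Q) i k =
      max (demazureRank Q i (k - 1)) (demazureRank Q i (k + 1) - 1) :=
  if_pos rfl

theorem demazureRank_cons_of_ne {j k : ℕ} (h : j ≠ k) (Q : List ℕ) (i : ℕ) :
    demazureRank (k :: Q) i j = demazureRank Q i j :=
  if_neg h

theorem demazureRank_map_eq_antidiagonalRank {L : List (ℕ × ℕ)} (hsort : L.Pairwise pdRel)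
    (hnodup : L.Nodup) (hpos : ∀ p ∈ L, 1 ≤ p.1 ∧ 1 ≤ p.2) (i j : ℕ) :
    demazureRank (L.map fun p => p.1 + p.2 - 1) i j = antidiagonalRank L.toFinset 1 i j := by
  induction L generalizing j with
  | nil => exact (antidiagonalRank_eq_min_of_rows_free (by simp) j).symm
  | cons p L ih =>
    obtain ⟨a, b, rfl⟩ : ∃ a b, p = (a + 1, b + 1) := by
      obtain ⟨h₁, h₂⟩ := hpos p List.mem_cons_self
      exact ⟨p.1 - 1, p.2 - 1, Prod.ext (by grind) (by grind)⟩
    rw [List.pairwise_cons] at hsort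
    rw [List.nodup_cons] at hnodup
    have ih := ih hsort.2 hnodup.2 fun p hp => hpos p (List.mem_cons_of_mem _ hp)
    have hfirst : ∀ q ∈ L.toFinset, a + 1 < q.1 ∨ a + 1 = q.1 ∧ q.2 < b + 1 := by
      intro q hq
      rw [List.mem_toFinset] at hq
      have hne : q ≠ (a + 1, b + 1) := fun h => hnodup.1 (h ▸ hq)
      have := hsort.1 q hq
      unfold pdRel at this
      grind
    rw [List.map_cons, List.toFinset_cons, show a + 1 + (b + 1) - 1 = a + b + 1 by omega]
    by_cases hj : j = a + b + 1
    · subst hj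
      rw [demazureRank_cons_self, ih, ih, antidiagonalRank_insert_self hfirst]
      rfl
    · rw [demazureRank_cons_of_ne hj, ih, antidiagonalRank_insert_of_ne hfirst i hj]

theorem demazureRank_pdWord {H : Finset (ℕ × ℕ)} (hH : ∀ p ∈ H, 1 ≤ p.1 ∧ 1 ≤ p.2) (i j : ℕ) :
    demazureRank (pdWord H) i j = antidiagonalRank H 1 i j := by
  rw [pdWord, demazureRank_map_eq_antidiagonalRank (pairwise_sort H pdRel) (sort_nodup H pdRel)
    (fun p hp => hH p ((mem_sort pdRel).1 hp)), sort_toFinset]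

theorem one_le_of_mem_pdWord {H : Finset (ℕ × ℕ)} (hH : ∀ p ∈ H, 1 ≤ p.1 ∧ 1 ≤ p.2) {k : ℕ}
    (hk : k ∈ pdWord H) : 1 ≤ k := by
  obtain ⟨p, hp, rfl⟩ := List.mem_map.1 hk
  have := hH p ((mem_sort pdRel).1 hp)
  omega

theorem exists_subset_pdWord_eq_of_sublist {H : Finset (ℕ × ℕ)} {l : List ℕ}
    (hl : l.Sublist (pdWord H)) : ∃ D ⊆ H, pdWord D = l := by
  obtain ⟨L, hL, rfl⟩ := List.sublist_map_iff.1 hl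
  refine ⟨L.toFinset, fun p hp => ?_, ?_⟩
  · exact (mem_sort pdRel).1 (hL.subset (List.mem_toFinset.1 hp))
  · have hnodup : L.Nodup := (sort_nodup H pdRel).sublist hL
    rw [pdWord, (List.toFinset_sort pdRel hnodup).2 ((pairwise_sort H pdRel).sublist hL)]

theorem demazureRank_zero_right {Q : List ℕ} (hQ : ∀ k ∈ Q, 1 ≤ k) (i : ℕ) :
    demazureRank Q i 0 = 0 := by
  induction Q with
  | nil => exact min_zero i
  | cons k Q ih =>
    rw [List.forall_mem_cons] at hQ
    rw [demazureRank_cons_of_ne (by omega), ih hQ.2]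

theorem demazureRank_le_left (Q : List ℕ) (i j : ℕ) : demazureRank Q i j ≤ i := by
  induction Q generalizing j with
  | nil => exact min_le_left i j
  | cons k Q ih =>
    by_cases hj : j = k
    · rw [hj, demazureRank_cons_self]
      exact max_le (ih _) ((Nat.sub_le _ _).trans (ih _))
    · exact (demazureRank_cons_of_ne hj Q i).trans_le (ih j)

theorem demazureRank_succ_right_bounds (Q : List ℕ) (i j : ℕ) :
    demazureRank Q i j ≤ demazureRank Q i (j + 1) ∧
      demazureRank Q i (j + 1) ≤ demazureRank Q i j + 1 := by
  induction Q generalizing j with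
  | nil => grind [demazureRank]
  | cons k Q ih =>
    have left := ih (k - 1)
    have right := ih k
    by_cases hj : j = k
    · rw [hj, demazureRank_cons_self, demazureRank_cons_of_ne (by omega)]
      grind
    by_cases hj' : j + 1 = k
    · subst hj'
      rw [demazureRank_cons_self, demazureRank_cons_of_ne hj]
      grind
    · rw [demazureRank_cons_of_ne hj, demazureRank_cons_of_ne hj']
      exact ih j

theorem demazureRank_add_right_le (Q : List ℕ) (i j d : ℕ) :
    demazureRank Q i (j + d) ≤ demazureRank Q i j + d := by
  induction d with
  | zero => rfl
  | succ d ih => exact ((demazureRank_succ_right_bounds Q i (j + d)).2).trans (by omega)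

theorem demazureRank_le_right {Q : List ℕ} (hQ : ∀ k ∈ Q, 1 ≤ k) (i j : ℕ) :
    demazureRank Q i j ≤ j := by
  simpa [demazureRank_zero_right hQ] using demazureRank_add_right_le Q i 0 j

theorem demazureRank_add_left_le (Q : List ℕ) (i j d : ℕ) :
    demazureRank Q (i + d) j ≤ demazureRank Q i j + d := by
  induction Q generalizing j with
  | nil => grind [demazureRank]
  | cons k Q ih =>
    by_cases hj : j = k
    · rw [hj, demazureRank_cons_self, demazureRank_cons_self]
      have left := ih (k - 1)
      have right := ih (k + 1)
      omega
    · rw [demazureRank_cons_of_ne hj, demazureRank_cons_of_ne hj]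
      exact ih j

/-! ### Ranks of permutations -/

section Rank

variable {w : Equiv.Perm ℕ}

theorem rnk_succ_left (w : Equiv.Perm ℕ) (i j : ℕ) :
    rnk w (i + 1) j = rnk w i j + if w (i + 1) ∈ Icc 1 j then 1 else 0 := by
  unfold rnk
  rw [← insert_Icc_right_eq_Icc_add_one (by omega), filter_insert]
  split_ifs
  · rw [card_insert_of_notMem (by simp)]
  · rfl

theorem rnk_inv (w : Equiv.Perm ℕ) (i j : ℕ) : rnk w⁻¹ j i = rnk w i j := by
  unfold rnk
  refine (card_bij (fun a _ => w a) (fun a ha => ?_) (fun a _ b _ h => w.injective h)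
    (fun b hb => ⟨w⁻¹ b, ?_, w.apply_symm_apply b⟩)).symm
  · simpa [and_comm] using ha
  · simpa [and_comm] using hb

theorem inv_apply_pos (hw : w 0 = 0) {b : ℕ} (hb : 1 ≤ b) : 1 ≤ w⁻¹ b := by
  rw [Nat.one_le_iff_ne_zero, ne_eq, Equiv.Perm.inv_eq_iff_eq, hw]
  omega

theorem rnk_succ_right (hw : w 0 = 0) (i j : ℕ) :
    rnk w i (j + 1) = rnk w i j + if w⁻¹ (j + 1) ≤ i then 1 else 0 := by
  rw [← rnk_inv, rnk_succ_left, rnk_inv]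
  simp only [mem_Icc, inv_apply_pos hw (Nat.le_add_left 1 j), true_and]

theorem rnk_swap_mul_of_ne {j k : ℕ} (hk : 1 ≤ k) (hjk : j ≠ k) (w : Equiv.Perm ℕ) (i : ℕ) :
    rnk (Equiv.swap k (k + 1) * w) i j = rnk w i j := by
  unfold rnk
  congr 1
  refine filter_congr fun a _ => ?_
  rw [Equiv.Perm.mul_apply, Equiv.swap_apply_def, mem_Icc, mem_Icc]
  split_ifs <;> omega

theorem min_le_rnk_one (i j : ℕ) : min i j ≤ rnk 1 i j := by
  have h : Icc 1 (min i j) ⊆ {a ∈ Icc 1 i | (1 : Equiv.Perm ℕ) a ∈ Icc 1 j} := by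
    intro a
    simp only [mem_filter, mem_Icc, Equiv.Perm.one_apply]
    omega
  calc min i j = #(Icc 1 (min i j)) := by rw [Nat.card_Icc, Nat.add_sub_cancel]
    _ ≤ rnk 1 i j := card_le_card h

theorem eq_one_of_forall_le_rnk (hw : w 0 = 0) (h : ∀ i, i ≤ rnk w i i) : w = 1 := by
  have apply_le : ∀ i, w i ≤ i := by
    intro i
    rcases i.eq_zero_or_pos with rfl | hi
    · exact hw.le
    have h_full : {a ∈ Icc 1 i | w a ∈ Icc 1 i} = Icc 1 i :=
      eq_of_subset_of_card_le (filter_subset _ _)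
        (by rw [Nat.card_Icc, Nat.add_sub_cancel]; exact h i)
    have h_mem := filter_eq_self.1 h_full i (mem_Icc.2 ⟨hi, le_rfl⟩)
    exact (mem_Icc.1 h_mem).2
  ext i
  induction i using Nat.strong_induction_on with
  | _ i ih =>
    by_contra hi
    exact hi (w.injective (ih (w i) (lt_of_le_of_ne (apply_le i) hi)))

end Rank

/-! ### The subword property -/

theorem wordProd_cons (k : ℕ) (Q : List ℕ) :
    wordProd (k :: Q) = Equiv.swap k (k + 1) * wordProd Q :=
  List.prod_cons

theorem swap_mul_apply_zero {w : Equiv.Perm ℕ} (hw : w 0 = 0) {k : ℕ} (hk : 1 ≤ k) :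
    (Equiv.swap k (k + 1) * w) 0 = 0 := by
  rw [Equiv.Perm.mul_apply, hw, Equiv.swap_apply_of_ne_of_ne] <;> omega

theorem wordProd_apply_zero {Q : List ℕ} (hQ : ∀ k ∈ Q, 1 ≤ k) : wordProd Q 0 = 0 := by
  induction Q with
  | nil => rfl
  | cons k Q ih =>
    rw [List.forall_mem_cons] at hQ
    rw [wordProd_cons]
    exact swap_mul_apply_zero (ih hQ.2) hQ.1

theorem demazureRank_le_rnk_wordProd {Q : List ℕ} (hQ : ∀ k ∈ Q, 1 ≤ k) (i j : ℕ) :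
    demazureRank Q i j ≤ rnk (wordProd Q) i j := by
  induction Q generalizing j with
  | nil => exact min_le_rnk_one i j
  | cons k Q ih =>
    have h_zero := wordProd_apply_zero hQ
    rw [List.forall_mem_cons] at hQ
    have off_column {j : ℕ} (hj : j ≠ k) :
        demazureRank Q i j ≤ rnk (wordProd (k :: Q)) i j := by
      rw [wordProd_cons, rnk_swap_mul_of_ne hQ.1 hj]
      exact ih hQ.2 j
    by_cases hj : j = k
    · obtain ⟨k, rfl⟩ := Nat.exists_eq_add_of_le' hQ.1
      have left := off_column (show k ≠ k + 1 by omega)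
      have right := off_column (show k + 1 + 1 ≠ k + 1 by omega)
      have step₁ := rnk_succ_right h_zero i k
      have step₂ := rnk_succ_right h_zero i (k + 1)
      rw [hj, demazureRank_cons_self, Nat.add_sub_cancel]
      split_ifs at step₁ step₂ <;> omega
    · exact (demazureRank_cons_of_ne hj Q i).trans_le (off_column hj)

/-- The exchange condition: the inversion `p < q` is created by a letter, which can be deleted. -/
theorem exists_wordProd_eq_swap_mul {Q : List ℕ} (hQ : ∀ k ∈ Q, 1 ≤ k) {p q : ℕ} (hpq : p < q)
    (h : (wordProd Q)⁻¹ q < (wordProd Q)⁻¹ p) :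
    ∃ l : List ℕ, (∀ k ∈ l, 1 ≤ k) ∧ l.length + 1 = Q.length ∧
      wordProd l = Equiv.swap p q * wordProd Q := by
  induction Q generalizing p q with
  | nil => exact absurd h hpq.not_gt
  | cons k Q ih =>
    rw [List.forall_mem_cons] at hQ
    by_cases hk : p = k ∧ q = k + 1
    · obtain ⟨rfl, rfl⟩ := hk
      exact ⟨Q, hQ.2, rfl, by rw [wordProd_cons, Equiv.swap_mul_self_mul]⟩
    · have hlt : Equiv.swap k (k + 1) p < Equiv.swap k (k + 1) q := by
        rw [Equiv.swap_apply_def, Equiv.swap_apply_def]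
        split_ifs <;> omega
      rw [wordProd_cons, mul_inv_rev, Equiv.swap_inv] at h
      obtain ⟨l, hl, hlength, hprod⟩ := ih hQ.2 hlt h
      refine ⟨k :: l, List.forall_mem_cons.2 ⟨hQ.1, hl⟩, by simp [hlength], ?_⟩
      rw [wordProd_cons, wordProd_cons, hprod, ← mul_assoc, ← mul_assoc,
        Equiv.mul_swap_eq_swap_mul, Equiv.swap_apply_self, Equiv.swap_apply_self]

section Subword

variable {w : Equiv.Perm ℕ} {k : ℕ} {Q : List ℕ}

theorem IsReducedWordOf.cons {l : List ℕ} (hl : IsReducedWordOf (Equiv.swap k (k + 1) * w) l)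
    (hk : 1 ≤ k) (hdes : w⁻¹ (k + 1) < w⁻¹ k) : IsReducedWordOf w (k :: l) := by
  obtain ⟨hpos, hprod, hmin⟩ := hl
  refine ⟨List.forall_mem_cons.2 ⟨hk, hpos⟩, ?_, fun l₁ hpos₁ hprod₁ => ?_⟩
  · rw [wordProd_cons, hprod, Equiv.swap_mul_self_mul]
  · obtain ⟨l₂, hpos₂, hlength, hprod₂⟩ :=
      exists_wordProd_eq_swap_mul hpos₁ k.lt_succ_self (hprod₁ ▸ hdes)
    have := hmin l₂ hpos₂ (hprod₂.trans (by rw [hprod₁]))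
    simp only [List.length_cons]
    omega

theorem demazureRank_le_rnk_swap_mul (hw : w 0 = 0) (hk : 1 ≤ k)
    (hdes : w⁻¹ (k + 1) < w⁻¹ k) (h : ∀ i j, demazureRank (k :: Q) i j ≤ rnk w i j) (i j : ℕ) :
    demazureRank Q i j ≤ rnk (Equiv.swap k (k + 1) * w) i j := by
  have off_column {j : ℕ} (hj : j ≠ k) : demazureRank Q i j ≤ rnk w i j :=
    demazureRank_cons_of_ne hj Q i ▸ h i j
  by_cases hj : j = k
  · obtain ⟨k, rfl⟩ := Nat.exists_eq_add_of_le' hk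
    have h_inv : (Equiv.swap (k + 1) (k + 1 + 1) * w)⁻¹ (k + 1) = w⁻¹ (k + 1 + 1) := by
      rw [mul_inv_rev, Equiv.swap_inv, Equiv.Perm.mul_apply, Equiv.swap_apply_left]
    have step := rnk_succ_right (swap_mul_apply_zero hw hk) i k
    rw [h_inv, rnk_swap_mul_of_ne (j := k) hk (by omega)] at step
    have step₁ := rnk_succ_right hw i k
    have step₂ := rnk_succ_right hw i (k + 1)
    have left := off_column (show k ≠ k + 1 by omega)
    have right := off_column (show k + 1 + 1 ≠ k + 1 by omega)
    have bounds₁ := demazureRank_succ_right_bounds Q i k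
    have bounds₂ := demazureRank_succ_right_bounds Q i (k + 1)
    subst hj
    split_ifs at step step₁ step₂ <;> omega
  · rw [rnk_swap_mul_of_ne hk hj]
    exact off_column hj

theorem demazureRank_le_rnk_of_cons (hw : w 0 = 0) (hk : 1 ≤ k) (hasc : w⁻¹ k ≤ w⁻¹ (k + 1))
    (h : ∀ i j, demazureRank (k :: Q) i j ≤ rnk w i j) (i j : ℕ) :
    demazureRank Q i j ≤ rnk w i j := by
  have off_column {j : ℕ} (hj : j ≠ k) : demazureRank Q i j ≤ rnk w i j :=
    demazureRank_cons_of_ne hj Q i ▸ h i j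
  by_cases hj : j = k
  · obtain ⟨k, rfl⟩ := Nat.exists_eq_add_of_le' hk
    have step₁ := rnk_succ_right hw i k
    have step₂ := rnk_succ_right hw i (k + 1)
    have left := off_column (show k ≠ k + 1 by omega)
    have right := off_column (show k + 1 + 1 ≠ k + 1 by omega)
    have bounds₁ := demazureRank_succ_right_bounds Q i k
    have bounds₂ := demazureRank_succ_right_bounds Q i (k + 1)
    subst hj
    split_ifs at step₁ step₂ <;> omega
  · exact off_column hj

theorem exists_sublist_isReducedWordOf (hQ : ∀ k ∈ Q, 1 ≤ k) (hw : w 0 = 0)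
    (h : ∀ i j, demazureRank Q i j ≤ rnk w i j) :
    ∃ l : List ℕ, l.Sublist Q ∧ IsReducedWordOf w l := by
  induction Q generalizing w with
  | nil =>
    have hw_one : w = 1 :=
      eq_one_of_forall_le_rnk hw fun i => by simpa [demazureRank] using h i i
    exact ⟨[], List.Sublist.refl _, by simp, hw_one ▸ rfl, by simp⟩
  | cons k Q ih =>
    rw [List.forall_mem_cons] at hQ
    rcases lt_or_ge (w⁻¹ (k + 1)) (w⁻¹ k) with hdes | hasc
    · obtain ⟨l, hsub, hl⟩ := ih hQ.2 (swap_mul_apply_zero hw hQ.1)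
        (demazureRank_le_rnk_swap_mul hw hQ.1 hdes h)
      exact ⟨k :: l, hsub.cons_cons k, hl.cons hQ.1 hdes⟩
    · obtain ⟨l, hsub, hl⟩ := ih hQ.2 hw (demazureRank_le_rnk_of_cons hw hQ.1 hasc h)
      exact ⟨l, hsub.cons k, hl⟩

end Subword

/-! ### Rank conditions outside `[m] × [n]` -/

section Extension

variable {w : Equiv.Perm ℕ} {m n : ℕ}

theorem strictMonoOn_Ioi_of_desR_subset (h : DesR w ⊆ Set.Icc 1 m) :
    StrictMonoOn w (Set.Ioi m) := by
  refine strictMonoOn_of_lt_add_one Set.ordConnected_Ioi fun a _ ha _ => ?_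
  refine lt_of_le_of_ne (not_lt.1 fun hdes => ?_) (w.injective.ne a.lt_succ_self.ne)
  exact (h ⟨Nat.one_le_of_lt ha, hdes⟩).2.not_gt ha

theorem rnk_eq_right_of_forall_lt (hw : w 0 = 0) {i j : ℕ} (h : ∀ a, i < a → j < w a) :
    rnk w i j = j := by
  have h_full : {b ∈ Icc 1 j | w⁻¹ b ∈ Icc 1 i} = Icc 1 j := by
    refine filter_eq_self.2 fun b hb => ?_
    rw [mem_Icc] at hb ⊢
    refine ⟨inv_apply_pos hw hb.1, not_lt.1 fun hlt => (h _ hlt).not_ge ?_⟩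
    simpa using hb.2
  rw [← rnk_inv, rnk, h_full, Nat.card_Icc, Nat.add_sub_cancel]

theorem min_le_rnk_add_left (hw : w 0 = 0) (hm : StrictMonoOn w (Set.Ioi m)) (j d : ℕ) :
    min j (rnk w m j + d) ≤ rnk w (m + d) j := by
  induction d with
  | zero => exact min_le_right _ _
  | succ d ih =>
    by_cases hj : w (m + d + 1) ≤ j
    · have h_pos : 1 ≤ w (m + d + 1) := by
        rw [Nat.one_le_iff_ne_zero, ← hw]
        exact w.injective.ne (Nat.succ_ne_zero _)
      rw [← add_assoc m d 1, rnk_succ_left, if_pos (mem_Icc.2 ⟨h_pos, hj⟩)]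
      omega
    · refine min_le_of_left_le (rnk_eq_right_of_forall_lt hw fun a ha => ?_).ge
      refine (not_le.1 hj).trans (hm ?_ ?_ ha) <;> simp only [Set.mem_Ioi] <;> omega

/-- Ranks of a word grow by at most one per row and per column, and `w` being increasing beyond `m`
(and `w⁻¹` beyond `n`) makes the ranks of `w` grow that fast for as long as they can. -/
theorem demazureRank_le_rnk_of_forall_mem_box (hw : w ∈ SmnInfty m n) {Q : List ℕ}
    (hQ : ∀ k ∈ Q, 1 ≤ k)
    (h : ∀ i ∈ Icc 1 m, ∀ j ∈ Icc 1 n, demazureRank Q i j ≤ rnk w i j) (i j : ℕ) :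
    demazureRank Q i j ≤ rnk w i j := by
  obtain ⟨⟨hw₀, -⟩, hdesR, hdesL⟩ := hw
  have hw₀' : w⁻¹ 0 = 0 := Equiv.Perm.inv_eq_iff_eq.2 hw₀.symm
  have in_box {i j : ℕ} (hi : i ≤ m) (hj : j ≤ n) : demazureRank Q i j ≤ rnk w i j := by
    rcases i.eq_zero_or_pos with rfl | hi₀
    · exact (demazureRank_le_left Q 0 j).trans (Nat.zero_le _)
    rcases j.eq_zero_or_pos with rfl | hj₀
    · exact (demazureRank_zero_right hQ i).trans_le (Nat.zero_le _)
    exact h i (mem_Icc.2 ⟨hi₀, hi⟩) j (mem_Icc.2 ⟨hj₀, hj⟩)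
  have in_columns (i : ℕ) {j : ℕ} (hj : j ≤ n) : demazureRank Q i j ≤ rnk w i j := by
    rcases le_total i m with hi | hi
    · exact in_box hi hj
    obtain ⟨d, rfl⟩ := Nat.exists_eq_add_of_le hi
    have growth := min_le_rnk_add_left hw₀ (strictMonoOn_Ioi_of_desR_subset hdesR) j d
    have := in_box le_rfl hj
    have := demazureRank_add_left_le Q m j d
    have := demazureRank_le_right hQ (m + d) j
    omega
  rcases le_total j n with hj | hj
  · exact in_columns i hj
  obtain ⟨d, rfl⟩ := Nat.exists_eq_add_of_le hj
  have growth := min_le_rnk_add_left hw₀' (strictMonoOn_Ioi_of_desR_subset hdesL) i d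
  rw [rnk_inv, rnk_inv] at growth
  have := in_columns i (le_refl n)
  have := demazureRank_add_right_le Q i n d
  have := demazureRank_le_left Q i (n + d)
  omega

theorem exists_mem_RP_inter_box_subset_iff (hw : w ∈ SmnInfty m n) {H : Finset (ℕ × ℕ)}
    (hH : ∀ p ∈ H, 1 ≤ p.1 ∧ 1 ≤ p.2) :
    (∃ D ∈ RP w, D ∩ Icc 1 m ×ˢ Icc 1 n ⊆ H) ↔
      ∀ i ∈ Icc 1 m, ∀ j ∈ Icc 1 n, antidiagonalRank H 1 i j ≤ rnk w i j := by
  constructor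
  · rintro ⟨D, ⟨hD, hpos, hprod, -⟩, hDH⟩ i hi j hj
    have h_avoid : (Icc 1 i ×ˢ Icc 1 j) \ H ⊆ (Icc 1 i ×ˢ Icc 1 j) \ D := by
      intro p hp
      have h_box : Icc 1 i ×ˢ Icc 1 j ⊆ Icc 1 m ×ˢ Icc 1 n :=
        product_subset_product (Icc_subset_Icc_right (mem_Icc.1 hi).2)
          (Icc_subset_Icc_right (mem_Icc.1 hj).2)
      rw [mem_sdiff] at hp ⊢
      exact ⟨hp.1, fun hpD => hp.2 (hDH (mem_inter.2 ⟨hpD, h_box hp.1⟩))⟩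
    calc antidiagonalRank H 1 i j
        ≤ antidiagonalRank D 1 i j := maxAntidiagonalCard_mono h_avoid
      _ = demazureRank (pdWord D) i j := (demazureRank_pdWord hD i j).symm
      _ ≤ rnk w i j := hprod ▸ demazureRank_le_rnk_wordProd hpos i j
  · intro h
    have hpos : ∀ k ∈ pdWord H, 1 ≤ k := fun k => one_le_of_mem_pdWord hH
    have h_rank := demazureRank_le_rnk_of_forall_mem_box hw hpos fun i hi j hj =>
      (demazureRank_pdWord hH i j).trans_le (h i hi j hj)
    obtain ⟨l, hsub, hl⟩ := exists_sublist_isReducedWordOf hpos hw.1.1 h_rank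
    obtain ⟨D, hDH, rfl⟩ := exists_subset_pdWord_eq_of_sublist hsub
    exact ⟨D, ⟨fun p hp => hH p (hDH hp), hl⟩, inter_subset_left.trans hDH⟩

end Extension

/-! ### The antidiagonals `A ⊙ B` -/

section Odot

variable {α β : Type*} [LinearOrder α] [LinearOrder β]

/-- The antidiagonal `A ⊙ B` pairing the rows of `A` in increasing order with the columns of `B` in
decreasing order. -/
def odot (A : Finset α) (B : Finset β) (h : #A = #B) : Finset (α × β) :=
  univ.map ⟨fun t : Fin #A => (A.orderEmbOfFin rfl t, B.orderEmbOfFin h.symm t.rev),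
    fun _ _ hst => (A.orderEmbOfFin rfl).injective (congrArg Prod.fst hst)⟩

variable {A : Finset α} {B : Finset β} {h : #A = #B}

theorem mem_odot {p : α × β} : p ∈ odot A B h ↔
    ∃ t : Fin #A, (A.orderEmbOfFin rfl t, B.orderEmbOfFin h.symm t.rev) = p := by
  simp only [odot, mem_map, mem_univ, true_and]
  rfl

theorem card_odot : #(odot A B h) = #A := by
  rw [odot, card_map, card_univ, Fintype.card_fin]

theorem fst_mem_of_mem_odot {p : α × β} (hp : p ∈ odot A B h) : p.1 ∈ A := by
  obtain ⟨t, rfl⟩ := mem_odot.1 hp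
  exact A.orderEmbOfFin_mem rfl t

theorem snd_mem_of_mem_odot {p : α × β} (hp : p ∈ odot A B h) : p.2 ∈ B := by
  obtain ⟨t, rfl⟩ := mem_odot.1 hp
  exact B.orderEmbOfFin_mem h.symm t.rev

theorem isAntidiagonal_odot : IsAntidiagonal (odot A B h) := by
  intro p hp q hq
  obtain ⟨s, rfl⟩ := mem_odot.1 hp
  obtain ⟨t, rfl⟩ := mem_odot.1 hq
  simp only [OrderEmbedding.lt_iff_lt, Fin.rev_lt_rev]

theorem IsAntidiagonal.exists_odot_eq {S : Finset (α × β)} (hS : IsAntidiagonal S) :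
    ∃ h : #(S.image Prod.fst) = #(S.image Prod.snd),
      odot (S.image Prod.fst) (S.image Prod.snd) h = S := by
  have card_fst : #(S.image Prod.fst) = #S :=
    card_image_of_injOn fun p hp q hq => hS.eq_of_fst_eq hp hq
  have card_snd : #(S.image Prod.snd) = #S :=
    card_image_of_injOn fun p hp q hq => hS.eq_of_snd_eq hp hq
  refine ⟨card_fst.trans card_snd.symm, eq_of_subset_of_card_le (fun q hq => ?_) ?_⟩
  · choose p hpS hp using fun t => mem_image.1 ((S.image Prod.fst).orderEmbOfFin_mem rfl t)
    have snd_strictMono : StrictMono fun t => (p (Fin.rev t)).2 := by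
      intro s t hst
      refine (hS _ (hpS _) _ (hpS _)).1 ?_
      rw [hp, hp, OrderEmbedding.lt_iff_lt, Fin.rev_lt_rev]
      exact hst
    have hp_snd := orderEmbOfFin_unique (card_snd.trans card_fst.symm)
      (fun t => mem_image_of_mem Prod.snd (hpS (Fin.rev t))) snd_strictMono
    obtain ⟨t, rfl⟩ := mem_odot.1 hq
    rw [← hp t, ← congrFun hp_snd t.rev, Fin.rev_rev]
    exact hpS t
  · rw [card_odot, card_fst]

end Odot

/-! ### The generators of `J_w` -/

section Box

variable {m n : ℕ}

/-- The index `v` of the variable `u_{ij}`, viewed as the box `(i, j)` of `[m] × [n]`. -/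
def box : Fin m × Fin n ↪ ℕ × ℕ where
  toFun v := (v.1 + 1, v.2 + 1)
  inj' := fun _ _ h => by simpa [Prod.ext_iff, Fin.ext_iff] using h

theorem box_apply (v : Fin m × Fin n) : box v = ((v.1 : ℕ) + 1, (v.2 : ℕ) + 1) := rfl

theorem map_box_univ : (univ : Finset (Fin m × Fin n)).map box = Icc 1 m ×ˢ Icc 1 n := by
  ext p
  simp only [mem_map, mem_univ, true_and, mem_product, mem_Icc]
  constructor
  · rintro ⟨v, rfl⟩
    grind [box_apply]
  · rintro ⟨⟨hi, him⟩, hj, hjn⟩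
    exact ⟨(⟨p.1 - 1, by omega⟩, ⟨p.2 - 1, by omega⟩),
      Prod.ext (Nat.sub_add_cancel hi) (Nat.sub_add_cancel hj)⟩

theorem isAntidiagonal_map_box {S : Finset (Fin m × Fin n)} :
    IsAntidiagonal (S.map box) ↔ IsAntidiagonal S := by
  simp only [IsAntidiagonal, forall_mem_map, box_apply, add_lt_add_iff_right, Fin.val_fin_lt]

theorem inter_box_subset_map_compl_iff {D : Finset (ℕ × ℕ)} {T : Finset (Fin m × Fin n)} :
    D ∩ Icc 1 m ×ˢ Icc 1 n ⊆ Tᶜ.map box ↔ ∀ v, box v ∈ D → v ∉ T := by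
  rw [← map_box_univ]
  constructor
  · intro h v hvD
    have hv := h (mem_inter.2 ⟨hvD, mem_map_of_mem box (mem_univ v)⟩)
    rwa [mem_map', mem_compl] at hv
  · intro h p hp
    rw [mem_inter, mem_map] at hp
    obtain ⟨hpD, v, -, rfl⟩ := hp
    exact (mem_map' box).2 (mem_compl.2 (h v hpD))

theorem product_Icc_sdiff_map_compl {T : Finset (Fin m × Fin n)} {i j : ℕ} (hi : i ≤ m)
    (hj : j ≤ n) :
    (Icc 1 i ×ˢ Icc 1 j) \ Tᶜ.map box =
      {v ∈ T | (v.1 : ℕ) + 1 ≤ i ∧ (v.2 : ℕ) + 1 ≤ j}.map box := by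
  have h_iff (v : Fin m × Fin n) : box v ∈ (Icc 1 i ×ˢ Icc 1 j) \ Tᶜ.map box ↔
      box v ∈ {v ∈ T | (v.1 : ℕ) + 1 ≤ i ∧ (v.2 : ℕ) + 1 ≤ j}.map box := by
    rw [mem_sdiff, mem_map', mem_map', mem_filter, mem_compl, not_not, and_comm, box_apply]
    simp
  have h_box : Icc 1 i ×ˢ Icc 1 j ⊆ (univ : Finset (Fin m × Fin n)).map box := by
    rw [map_box_univ]
    exact product_subset_product (Icc_subset_Icc_right hi) (Icc_subset_Icc_right hj)
  ext p
  constructor <;> intro hp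
  · obtain ⟨v, -, rfl⟩ := mem_map.1 (h_box (mem_sdiff.1 hp).1)
    exact (h_iff v).1 hp
  · obtain ⟨v, -, rfl⟩ := mem_map.1 hp
    exact (h_iff v).2 hp

theorem le_antidiagonalRank_map_compl_iff {T : Finset (Fin m × Fin n)} {s i j : ℕ}
    (hi : i ≤ m) (hj : j ≤ n) :
    s ≤ antidiagonalRank (Tᶜ.map box) 1 i j ↔ ∃ S ⊆ T, IsAntidiagonal S ∧
      (∀ v ∈ S, (v.1 : ℕ) + 1 ≤ i ∧ (v.2 : ℕ) + 1 ≤ j) ∧ #S = s := by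
  rw [antidiagonalRank, product_Icc_sdiff_map_compl hi hj, le_maxAntidiagonalCard_iff]
  constructor
  · rintro ⟨_, hS, hanti, rfl⟩
    obtain ⟨S, hST, rfl⟩ := subset_map_iff.1 hS
    exact ⟨S, hST.trans (filter_subset _ _), isAntidiagonal_map_box.1 hanti,
      fun v hv => (mem_filter.1 (hST hv)).2, (card_map _).symm⟩
  · rintro ⟨S, hST, hanti, hbox, rfl⟩
    exact ⟨S.map box, map_subset_map.2 fun v hv => mem_filter.2 ⟨hST hv, hbox v hv⟩,
      isAntidiagonal_map_box.2 hanti, card_map _⟩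

/-- The antidiagonals `A ⊙ B` of the generators of `J_w`. -/
def antidiagonalGenerators (m n : ℕ) (w : Equiv.Perm ℕ) : Set (Finset (Fin m × Fin n)) :=
  {S | ∃ i ∈ Icc 1 m, ∃ j ∈ Icc 1 n, IsAntidiagonal S ∧
    (∀ v ∈ S, (v.1 : ℕ) + 1 ≤ i ∧ (v.2 : ℕ) + 1 ≤ j) ∧ #S = rnk w i j + 1}

theorem exists_antidiagonalGenerators_subset_iff {w : Equiv.Perm ℕ} (hw : w ∈ SmnInfty m n)
    (T : Finset (Fin m × Fin n)) :
    (∃ S ∈ antidiagonalGenerators m n w, S ⊆ T) ↔ ∀ D ∈ RP w, ∃ v, box v ∈ D ∧ v ∈ T := by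
  have hH : ∀ p ∈ Tᶜ.map box, 1 ≤ p.1 ∧ 1 ≤ p.2 := by
    simp only [mem_map]
    rintro _ ⟨v, -, rfl⟩
    exact ⟨Nat.le_add_left 1 v.1, Nat.le_add_left 1 v.2⟩
  have key := not_congr (exists_mem_RP_inter_box_subset_iff hw hH)
  simp only [inter_box_subset_map_compl_iff] at key
  push Not at key
  rw [key]
  constructor
  · rintro ⟨S, ⟨i, hi, j, hj, hanti, hbox, hcard⟩, hST⟩
    exact ⟨i, hi, j, hj, (le_antidiagonalRank_map_compl_iff (mem_Icc.1 hi).2 (mem_Icc.1 hj).2).2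
      ⟨S, hST, hanti, hbox, hcard⟩⟩
  · rintro ⟨i, hi, j, hj, hlt⟩
    obtain ⟨S, hST, hanti, hbox, hcard⟩ :=
      (le_antidiagonalRank_map_compl_iff (mem_Icc.1 hi).2 (mem_Icc.1 hj).2).1 hlt
    exact ⟨S, ⟨i, hi, j, hj, hanti, hbox, hcard⟩, hST⟩

theorem genMon_eq_prod_odot (R : Type*) [CommRing R] {A : Finset (Fin m)}
    {B : Finset (Fin n)} (h : #A = #B) :
    genMon R A B h = ∏ v ∈ odot A B h, MvPolynomial.X v := by
  rw [odot, prod_map]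
  rfl

theorem setOf_genMon_eq_image (R : Type*) [CommRing R] (w : Equiv.Perm ℕ) :
    {g : MvPolynomial (Fin m × Fin n) R |
      ∃ (i j : ℕ) (A : Finset (Fin m)) (B : Finset (Fin n)) (h : A.card = B.card),
        1 ≤ i ∧ i ≤ m ∧ 1 ≤ j ∧ j ≤ n ∧ (∀ a ∈ A, (a : ℕ) + 1 ≤ i) ∧
        (∀ b ∈ B, (b : ℕ) + 1 ≤ j) ∧ A.card = rnk w i j + 1 ∧ g = genMon R A B h} =
      (fun S => ∏ v ∈ S, MvPolynomial.X v) '' antidiagonalGenerators m n w := by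
  ext g
  constructor
  · rintro ⟨i, j, A, B, h, hi, him, hj, hjn, hA, hB, hcard, rfl⟩
    exact ⟨odot A B h, ⟨i, mem_Icc.2 ⟨hi, him⟩, j, mem_Icc.2 ⟨hj, hjn⟩, isAntidiagonal_odot,
      fun v hv => ⟨hA _ (fst_mem_of_mem_odot hv), hB _ (snd_mem_of_mem_odot hv)⟩,
      card_odot.trans hcard⟩, (genMon_eq_prod_odot R h).symm⟩
  · rintro ⟨S, ⟨i, hi, j, hj, hanti, hbox, hcard⟩, rfl⟩
    rw [mem_Icc] at hi hj
    obtain ⟨h, hS⟩ := hanti.exists_odot_eq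
    refine ⟨i, j, _, _, h, hi.1, hi.2, hj.1, hj.2, ?_, ?_, ?_, ?_⟩
    · exact forall_mem_image.2 fun v hv => (hbox v hv).1
    · exact forall_mem_image.2 fun v hv => (hbox v hv).2
    · rw [← card_odot (h := h), hS, hcard]
    · rw [genMon_eq_prod_odot, hS]

end Box

/-! ### Squarefree monomial ideals -/

section SquarefreeMonomial

variable {R σ : Type*} [CommSemiring R]

theorem sum_single_one_le_iff {S : Finset σ} {e : σ →₀ ℕ} :
    ∑ v ∈ S, Finsupp.single v 1 ≤ e ↔ S ⊆ e.support := by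
  classical
  simp only [Finsupp.le_def, Finsupp.finsetSum_apply, Finsupp.single_apply, sum_ite_eq',
    subset_iff, Finsupp.mem_support_iff]
  refine forall_congr' fun v => ?_
  split_ifs with hv <;> simp [hv, Nat.one_le_iff_ne_zero]

theorem mem_span_image_prod_X_iff {𝒮 : Set (Finset σ)} {f : MvPolynomial σ R} :
    f ∈ Ideal.span ((fun S => ∏ v ∈ S, MvPolynomial.X v) '' 𝒮) ↔
      ∀ e ∈ f.support, ∃ S ∈ 𝒮, S ⊆ e.support := by
  have prod_X (S : Finset σ) : ∏ v ∈ S, (MvPolynomial.X v : MvPolynomial σ R) =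
      MvPolynomial.monomial (∑ v ∈ S, Finsupp.single v 1) 1 :=
    (MvPolynomial.monomial_sum_one S _).symm
  simp only [prod_X]
  rw [← Set.image_image (fun e => MvPolynomial.monomial e (1 : R)),
    MvPolynomial.mem_ideal_span_monomial_image]
  simp only [Set.exists_mem_image, sum_single_one_le_iff]

theorem span_image_prod_X_eq_iInf_span_image_X {ι : Type*} {𝒮 : Set (Finset σ)} {𝒟 : Set ι}
    {V : ι → Set σ} (h : ∀ T : Finset σ, (∃ S ∈ 𝒮, S ⊆ T) ↔ ∀ D ∈ 𝒟, ∃ v ∈ V D, v ∈ T) :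
    Ideal.span ((fun S => ∏ v ∈ S, (MvPolynomial.X v : MvPolynomial σ R)) '' 𝒮) =
      ⨅ D ∈ 𝒟, Ideal.span (MvPolynomial.X '' V D) := by
  ext f
  simp only [mem_span_image_prod_X_iff, h, Submodule.mem_iInf,
    MvPolynomial.mem_ideal_span_X_image, Finsupp.mem_support_iff]
  exact ⟨fun H D hD e he => H e he D hD, fun H e he D hD => H D hD e he⟩

end SquarefreeMonomial

theorem statement18_general (R : Type*) [CommRing R] {m n : ℕ} {w : Equiv.Perm ℕ}
    (hw : w ∈ SmnInfty m n) :
    Ideal.span {g : MvPolynomial (Fin m × Fin n) R |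
      ∃ (i j : ℕ) (A : Finset (Fin m)) (B : Finset (Fin n)) (h : A.card = B.card),
        1 ≤ i ∧ i ≤ m ∧ 1 ≤ j ∧ j ≤ n ∧ (∀ a ∈ A, (a : ℕ) + 1 ≤ i) ∧
        (∀ b ∈ B, (b : ℕ) + 1 ≤ j) ∧ A.card = rnk w i j + 1 ∧ g = genMon R A B h} =
      ⨅ D ∈ RP w, Ideal.span {g : MvPolynomial (Fin m × Fin n) R |
        ∃ v : Fin m × Fin n, ((v.1 : ℕ) + 1, (v.2 : ℕ) + 1) ∈ D ∧ g = MvPolynomial.X v} := by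
  have variables_eq (D : Finset (ℕ × ℕ)) :
      {g : MvPolynomial (Fin m × Fin n) R |
        ∃ v : Fin m × Fin n, ((v.1 : ℕ) + 1, (v.2 : ℕ) + 1) ∈ D ∧ g = MvPolynomial.X v} =
        MvPolynomial.X '' {v | box v ∈ D} :=
    Set.ext fun g => exists_congr fun v => and_congr_right fun _ => eq_comm
  simp only [setOf_genMon_eq_image, variables_eq]
  exact span_image_prod_X_eq_iInf_span_image_X (exists_antidiagonalGenerators_subset_iff hw)

/-- For `w ∈ S^{m,n}_∞`, the monomial ideal `J_w` equals the
intersection, over all reduced pipe dreams `D ∈ RP(w)`, of the ideals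
`(u_{ij} : (i,j) ∈ D)`. -/
theorem statement18 (K : Type*) [Field K] [IsAlgClosed K] (m n : ℕ)
    (hm : 1 ≤ m) (hn : 1 ≤ n) (w : Equiv.Perm ℕ) (hw : w ∈ SmnInfty m n) :
    JwIdeal K m n w = ⨅ D ∈ RP w,
      Ideal.span {g : MvPolynomial (Fin m × Fin n) K |
        ∃ v : Fin m × Fin n, ((v.1 : ℕ) + 1, (v.2 : ℕ) + 1) ∈ D ∧
          g = MvPolynomial.X v} :=
  statement18_general K hw

end Paper
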